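/- Under the stated hypotheses, let u : W → ℝ be smooth and positively homogeneous of degree 0 in y (u(x,ty) = u(x,y) for t > 0). Then at every point of W where F = 1: |X(∇^·u)|² = |∇^·(Xu)|² + |∇^:u|² − 2⟨∇^:u, ∇^·(Xu)⟩ + ⟨Y(y), ∇^·u⟩², where Y(y)^i := Y^i_j y^j and for a semibasic vector field V, (XV)^i := y^k V^i_{:k}. -/

import Mathlib

noncomputable section

/-- A point of the local chart `W ⊆ ℝⁿ × (ℝⁿ ∖ {0})` of `TM ∖ {0}`. -/
abbrev Pt (n : ℕ) := (Fin n → ℝ) × (Fin n → ℝ)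

/-- Partial derivative in the `k`-th base (`x`) direction. -/
def pdx {n : ℕ} (k : Fin n) (f : Pt n → ℝ) (z : Pt n) : ℝ :=
  fderiv ℝ f z (Pi.single k 1, 0)

/-- Partial derivative in the `k`-th fibre (`y`) direction. -/
def pdy {n : ℕ} (k : Fin n) (f : Pt n → ℝ) (z : Pt n) : ℝ :=
  fderiv ℝ f z (0, Pi.single k 1)

/-- The fundamental tensor `g_{ij} = ½ ∂²(F²)/∂y^i∂y^j`. -/
def gF {n : ℕ} (F : Pt n → ℝ) (i j : Fin n) : Pt n → ℝ :=
  fun z => (1 / 2 : ℝ) * pdy i (pdy j (fun w => F w ^ 2)) z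

/-- The Cartan tensor `C_{ijk} = ¼ ∂³(F²)/∂y^i∂y^j∂y^k`. -/
def CF {n : ℕ} (F : Pt n → ℝ) (i j k : Fin n) : Pt n → ℝ :=
  fun z => (1 / 4 : ℝ) * pdy i (pdy j (pdy k (fun w => F w ^ 2))) z

/-- `y_k := g_{kj} y^j`. -/
def ylow {n : ℕ} (F : Pt n → ℝ) (k : Fin n) : Pt n → ℝ :=
  fun z => ∑ j, gF F k j z * z.2 j

/-- `N^i_j := Γ^i_{jk} y^k`. -/
def Nc {n : ℕ} (Γ : Fin n → Fin n → Fin n → Pt n → ℝ) (i j : Fin n) : Pt n → ℝ :=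
  fun z => ∑ k, Γ i j k z * z.2 k

/-- Horizontal derivative of a scalar: `u_{|k} := ∂u/∂x^k − N^p_k ∂u/∂y^p`. -/
def dhS {n : ℕ} (Γ : Fin n → Fin n → Fin n → Pt n → ℝ) (k : Fin n) (u : Pt n → ℝ) :
    Pt n → ℝ :=
  fun z => pdx k u z - ∑ p, Nc Γ p k z * pdy p u z

/-- The Chern curvature contraction `P^i_{lk} := −y^j ∂Γ^i_{jl}/∂y^k`. -/
def Pc {n : ℕ} (Γ : Fin n → Fin n → Fin n → Pt n → ℝ) (i l k : Fin n) : Pt n → ℝ :=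
  fun z => -∑ j, z.2 j * pdy k (Γ i j l) z

/-- The Riemann curvature tensor `R^i_{jkl}` of the connection. -/
def Rfull {n : ℕ} (Γ : Fin n → Fin n → Fin n → Pt n → ℝ) (i j k l : Fin n) :
    Pt n → ℝ :=
  fun z => pdx k (Γ i j l) z - pdx l (Γ i j k) z
    + (∑ m, pdy m (Γ i j k) z * Nc Γ m l z)
    - (∑ m, pdy m (Γ i j l) z * Nc Γ m k z)
    + (∑ m, Γ m j l z * Γ i m k z) - ∑ m, Γ m j k z * Γ i m l z

/-- `R^i_{kl} := y^j R^i_{jkl}`. -/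
def Rc {n : ℕ} (Γ : Fin n → Fin n → Fin n → Pt n → ℝ) (i k l : Fin n) : Pt n → ℝ :=
  fun z => ∑ j, z.2 j * Rfull Γ i j k l z

/-- The Lorentz force `Y^i_j := Ω_{jk} g^{ik}` (with `Ω` a function of `x` only). -/
def Yl {n : ℕ} (Ω : Fin n → Fin n → (Fin n → ℝ) → ℝ)
    (ginv : Fin n → Fin n → Pt n → ℝ) (i j : Fin n) : Pt n → ℝ :=
  fun z => ∑ k, Ω j k z.1 * ginv i k z

/-- Magnetic derivative of a scalar: `u_{:k} := u_{|k} + F Y^j_k u_{·j}`. -/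
def dmS {n : ℕ} (F : Pt n → ℝ) (Γ : Fin n → Fin n → Fin n → Pt n → ℝ)
    (Ω : Fin n → Fin n → (Fin n → ℝ) → ℝ) (ginv : Fin n → Fin n → Pt n → ℝ)
    (k : Fin n) (u : Pt n → ℝ) : Pt n → ℝ :=
  fun z => dhS Γ k u z + F z * ∑ j, Yl Ω ginv j k z * pdy j u z

/-- Horizontal covariant derivative of the Lorentz force:
`Y^i_{j|k} := ∂Y^i_j/∂x^k − N^p_k ∂Y^i_j/∂y^p + Γ^i_{kp} Y^p_j − Γ^p_{kj} Y^i_p`. -/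
def Ydh {n : ℕ} (Γ : Fin n → Fin n → Fin n → Pt n → ℝ)
    (Ω : Fin n → Fin n → (Fin n → ℝ) → ℝ) (ginv : Fin n → Fin n → Pt n → ℝ)
    (i j k : Fin n) : Pt n → ℝ :=
  fun z => pdx k (Yl Ω ginv i j) z - (∑ p, Nc Γ p k z * pdy p (Yl Ω ginv i j) z)
    + (∑ p, Γ i k p z * Yl Ω ginv p j z) - ∑ p, Γ p k j z * Yl Ω ginv i p z

/-- The twisted curvature `R̃^i_{lk}` of the magnetic flow. -/
def Rt {n : ℕ} (F : Pt n → ℝ) (Γ : Fin n → Fin n → Fin n → Pt n → ℝ)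
    (Ω : Fin n → Fin n → (Fin n → ℝ) → ℝ) (ginv : Fin n → Fin n → Pt n → ℝ)
    (i l k : Fin n) : Pt n → ℝ :=
  fun z => Rc Γ i l k z
    + (Ydh Γ Ω ginv i l k z - Ydh Γ Ω ginv i k l z)
    - ((∑ m, Pc Γ i l m z * Yl Ω ginv m k z) - ∑ m, Pc Γ i k m z * Yl Ω ginv m l z)
    + ((∑ j, Yl Ω ginv j l z * pdy j (Yl Ω ginv i k) z)
        - ∑ j, Yl Ω ginv j k z * pdy j (Yl Ω ginv i l) z)
    + ∑ s, ylow F s z * (Yl Ω ginv s k z * Yl Ω ginv i l z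
        - Yl Ω ginv s l z * Yl Ω ginv i k z)

/-- `∇^·u := (g^{ij} u_{·j})`. -/
def nablaV {n : ℕ} (ginv : Fin n → Fin n → Pt n → ℝ) (u : Pt n → ℝ) (i : Fin n) :
    Pt n → ℝ :=
  fun z => ∑ j, ginv i j z * pdy j u z

/-- `∇^:u := (g^{ij} u_{:j})`. -/
def nablaM {n : ℕ} (F : Pt n → ℝ) (Γ : Fin n → Fin n → Fin n → Pt n → ℝ)
    (Ω : Fin n → Fin n → (Fin n → ℝ) → ℝ) (ginv : Fin n → Fin n → Pt n → ℝ)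
    (u : Pt n → ℝ) (i : Fin n) : Pt n → ℝ :=
  fun z => ∑ j, ginv i j z * dmS F Γ Ω ginv j u z

/-- The generator applied to a scalar: `Xu := y^k u_{:k}`. -/
def Xs {n : ℕ} (F : Pt n → ℝ) (Γ : Fin n → Fin n → Fin n → Pt n → ℝ)
    (Ω : Fin n → Fin n → (Fin n → ℝ) → ℝ) (ginv : Fin n → Fin n → Pt n → ℝ)
    (u : Pt n → ℝ) : Pt n → ℝ :=
  fun z => ∑ k, z.2 k * dmS F Γ Ω ginv k u z

/-- `⟨U,V⟩ := g_{ij} U^i V^j`. -/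
def iprod {n : ℕ} (F : Pt n → ℝ) (U V : Fin n → Pt n → ℝ) : Pt n → ℝ :=
  fun z => ∑ i, ∑ j, gF F i j z * U i z * V j z

/-- Magnetic derivative of a semibasic vector field:
`U^i_{:k} := U^i_{|k} + F Y^j_k U^i_{·j}`. -/
def dmVec {n : ℕ} (F : Pt n → ℝ) (Γ : Fin n → Fin n → Fin n → Pt n → ℝ)
    (Ω : Fin n → Fin n → (Fin n → ℝ) → ℝ) (ginv : Fin n → Fin n → Pt n → ℝ)
    (k : Fin n) (U : Fin n → Pt n → ℝ) (i : Fin n) : Pt n → ℝ :=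
  fun z => pdx k (U i) z - (∑ p, Nc Γ p k z * pdy p (U i) z)
    + (∑ p, Γ i k p z * U p z)
    + F z * ∑ j, Yl Ω ginv j k z * pdy j (U i) z

/-- The generator applied to a semibasic vector field: `(XV)^i := y^k V^i_{:k}`. -/
def XVec {n : ℕ} (F : Pt n → ℝ) (Γ : Fin n → Fin n → Fin n → Pt n → ℝ)
    (Ω : Fin n → Fin n → (Fin n → ℝ) → ℝ) (ginv : Fin n → Fin n → Pt n → ℝ)
    (V : Fin n → Pt n → ℝ) (i : Fin n) : Pt n → ℝ :=
  fun z => ∑ k, z.2 k * dmVec F Γ Ω ginv k V i z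

/-- The Lorentz force applied to `y`: `Y(y)^i := Y^i_j y^j`. -/
def Yy {n : ℕ} (Ω : Fin n → Fin n → (Fin n → ℝ) → ℝ)
    (ginv : Fin n → Fin n → Pt n → ℝ) (i : Fin n) : Pt n → ℝ :=
  fun z => ∑ j, Yl Ω ginv i j z * z.2 j

section helpers

open Finset

variable {n : ℕ}

theorem fderiv_expand (f : Pt n → ℝ) (z : Pt n) (a b : Fin n → ℝ) :
    fderiv ℝ f z (a, b) = ∑ k, a k * pdx k f z + ∑ k, b k * pdy k f z := by
  have ha : (a, b) = ∑ k, a k • ((Pi.single k 1, 0) : Pt n)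
      + ∑ k, b k • ((0, Pi.single k 1) : Pt n) := by
    ext i
    · simp [Prod.fst_sum, Finset.sum_apply, Pi.single_apply]
    · simp [Prod.snd_sum, Finset.sum_apply, Pi.single_apply]
  rw [ha, map_add, map_sum, map_sum]
  simp only [map_smul, smul_eq_mul, pdx, pdy]

theorem euler_hom (f : Pt n → ℝ) (d : ℕ) (z : Pt n)
    (hf : DifferentiableAt ℝ f z)
    (hh : ∀ t : ℝ, 0 < t → f (z.1, t • z.2) = t ^ d * f z) :
    ∑ k, z.2 k * pdy k f z = d * f z := by
  have h1 : HasDerivAt (fun t : ℝ => ((z.1, t • z.2) : Pt n)) (0, z.2) 1 := by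
    have := (hasDerivAt_const (1:ℝ) z.1).prodMk ((hasDerivAt_id (1:ℝ)).smul_const z.2)
    simpa using this
  have hz : ((z.1, (1:ℝ) • z.2) : Pt n) = z := by simp
  have h2 : HasDerivAt (fun t : ℝ => f (z.1, t • z.2)) (fderiv ℝ f z (0, z.2)) 1 := by
    have hf' : HasFDerivAt f (fderiv ℝ f z) ((z.1, (1:ℝ) • z.2) : Pt n) := by
      rw [hz]; exact hf.hasFDerivAt
    exact hf'.comp_hasDerivAt (1:ℝ) h1
  have h3 : HasDerivAt (fun t : ℝ => t ^ d * f z) (d * f z) 1 := by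
    simpa using (hasDerivAt_pow d (1:ℝ)).mul_const (f z)
  have h4 : (fun t : ℝ => f (z.1, t • z.2)) =ᶠ[nhds 1] (fun t : ℝ => t ^ d * f z) := by
    filter_upwards [lt_mem_nhds (zero_lt_one : (0:ℝ) < 1)] with t ht using hh t ht
  have h5 := h2.unique (h3.congr_of_eventuallyEq h4)
  rw [fderiv_expand] at h5
  simpa using h5

theorem fderiv_dir_smooth {W : Set (Pt n)} (hW : IsOpen W) {f : Pt n → ℝ}
    (hf : ContDiffOn ℝ (⊤ : ℕ∞) f W) (v : Pt n) :
    ContDiffOn ℝ (⊤ : ℕ∞) (fun z => fderiv ℝ f z v) W :=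
  (hf.fderiv_of_isOpen hW (m := (⊤ : ℕ∞)) (by simp)).clm_apply contDiffOn_const

theorem pdy_smooth {W : Set (Pt n)} (hW : IsOpen W) {f : Pt n → ℝ}
    (hf : ContDiffOn ℝ (⊤ : ℕ∞) f W) (k : Fin n) :
    ContDiffOn ℝ (⊤ : ℕ∞) (pdy k f) W := fderiv_dir_smooth hW hf _

theorem pdx_smooth {W : Set (Pt n)} (hW : IsOpen W) {f : Pt n → ℝ}
    (hf : ContDiffOn ℝ (⊤ : ℕ∞) f W) (k : Fin n) :
    ContDiffOn ℝ (⊤ : ℕ∞) (pdx k f) W := fderiv_dir_smooth hW hf _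

theorem smooth_diff {W : Set (Pt n)} (hW : IsOpen W) {f : Pt n → ℝ}
    (hf : ContDiffOn ℝ (⊤ : ℕ∞) f W) {z : Pt n} (hz : z ∈ W) : DifferentiableAt ℝ f z :=
  (hf.contDiffAt (hW.mem_nhds hz)).differentiableAt (by simp)

theorem dir_comm {W : Set (Pt n)} (hW : IsOpen W) {f : Pt n → ℝ}
    (hf : ContDiffOn ℝ (⊤ : ℕ∞) f W) {z : Pt n} (hz : z ∈ W) (v w : Pt n) :
    fderiv ℝ (fun a => fderiv ℝ f a v) z w = fderiv ℝ (fun a => fderiv ℝ f a w) z v := by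
  have hc := hf.contDiffAt (hW.mem_nhds hz)
  have hs : IsSymmSndFDerivAt ℝ f z := hc.isSymmSndFDerivAt (by
    simp only [minSmoothness_of_isRCLikeNormedField]
    exact WithTop.coe_le_coe.2 le_top)
  have hd : DifferentiableAt ℝ (fderiv ℝ f) z :=
    (hc.fderiv_right (m := (⊤ : ℕ∞)) (by simp)).differentiableAt (by simp)
  have key : ∀ v w : Pt n, fderiv ℝ (fun a => fderiv ℝ f a v) z w
      = fderiv ℝ (fderiv ℝ f) z w v := by
    intro v w
    rw [fderiv_clm_apply hd (differentiableAt_const v)]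
    simp
  rw [key, key]
  exact hs.eq _ _

theorem pdy_comm {W : Set (Pt n)} (hW : IsOpen W) {f : Pt n → ℝ}
    (hf : ContDiffOn ℝ (⊤ : ℕ∞) f W) {z : Pt n} (hz : z ∈ W) (i j : Fin n) :
    pdy i (pdy j f) z = pdy j (pdy i f) z := dir_comm hW hf hz _ _

theorem pdyx_comm {W : Set (Pt n)} (hW : IsOpen W) {f : Pt n → ℝ}
    (hf : ContDiffOn ℝ (⊤ : ℕ∞) f W) {z : Pt n} (hz : z ∈ W) (i j : Fin n) :
    pdy i (pdx j f) z = pdx j (pdy i f) z := dir_comm hW hf hz _ _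

theorem fderiv_congr_on {W : Set (Pt n)} (hW : IsOpen W) {f g : Pt n → ℝ}
    (h : ∀ z ∈ W, f z = g z) {z : Pt n} (hz : z ∈ W) : fderiv ℝ f z = fderiv ℝ g z :=
  Filter.EventuallyEq.fderiv_eq (by filter_upwards [hW.mem_nhds hz] with a ha using h a ha)

/-- product-sum rule -/
theorem fderiv_sum_mul {f g : Fin n → Pt n → ℝ} {z : Pt n}
    (hf : ∀ k, DifferentiableAt ℝ (f k) z) (hg : ∀ k, DifferentiableAt ℝ (g k) z) (v : Pt n) :
    fderiv ℝ (fun a => ∑ k, f k a * g k a) z v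
      = ∑ k, (fderiv ℝ (f k) z v * g k z + f k z * fderiv ℝ (g k) z v) := by
  rw [fderiv_fun_sum (fun k _ => (hf k).fun_mul (hg k))]
  rw [_root_.sum_apply]
  refine Finset.sum_congr rfl fun k _ => ?_
  rw [fderiv_fun_mul (hf k) (hg k)]
  simp; ring

theorem diff_sum_mul {f g : Fin n → Pt n → ℝ} {z : Pt n}
    (hf : ∀ k, DifferentiableAt ℝ (f k) z) (hg : ∀ k, DifferentiableAt ℝ (g k) z) :
    DifferentiableAt ℝ (fun a => ∑ k, f k a * g k a) z := by
  fun_prop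

theorem diff_coord (z : Pt n) (k : Fin n) : DifferentiableAt ℝ (fun a : Pt n => a.2 k) z := by
  fun_prop

theorem fderiv_coord (z v : Pt n) (k : Fin n) :
    fderiv ℝ (fun a : Pt n => a.2 k) z v = v.2 k := by
  have : (fun a : Pt n => a.2 k) = ((ContinuousLinearMap.proj k).comp
    (ContinuousLinearMap.snd ℝ (Fin n → ℝ) (Fin n → ℝ)) : Pt n →L[ℝ] ℝ) := rfl
  rw [this, ContinuousLinearMap.fderiv]; rfl

theorem inv_diff {W : Set (Pt n)} (hW : IsOpen W) (g h : Fin n → Fin n → Pt n → ℝ)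
    (hg : ∀ i j, ∀ z ∈ W, DifferentiableAt ℝ (g i j) z)
    (hgh : ∀ z ∈ W, ∀ i j, ∑ k, g i k z * h k j z = if i = j then (1:ℝ) else 0)
    (i j : Fin n) {z : Pt n} (hz : z ∈ W) : DifferentiableAt ℝ (h i j) z := by
  have e : ∀ a ∈ W, (Matrix.of fun i j => g i j a) * (Matrix.of fun i j => h i j a) = 1 := by
    intro a ha
    ext i j
    rw [Matrix.mul_apply, Matrix.one_apply]
    exact hgh a ha i j
  have hdet : ∀ M : Pt n → Matrix (Fin n) (Fin n) ℝ,
      (∀ i j, DifferentiableAt ℝ (fun a => M a i j) z) →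
      DifferentiableAt ℝ (fun a => (M a).det) z := by
    intro M hM
    simp only [Matrix.det_apply']
    refine DifferentiableAt.fun_sum fun σ _ => ?_
    refine (differentiableAt_const _).mul ?_
    exact (HasFDerivAt.finsetProd (g := fun k a => M a (σ k) k)
      fun k _ => (hM (σ k) k).hasFDerivAt).differentiableAt
  have hne : (Matrix.of fun i j => g i j z).det ≠ 0 := by
    intro h0
    have := congrArg Matrix.det (e z hz)
    rw [Matrix.det_mul, h0] at this
    simp at this
  have heq : ∀ a ∈ W, h i j a = ((Matrix.of fun i j => g i j a).det)⁻¹ *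
      ((Matrix.of fun i j => g i j a).updateRow j (Pi.single i 1)).det := by
    intro a ha
    have := Matrix.inv_eq_right_inv (e a ha)
    have h2 : (Matrix.of fun i j => h i j a) i j = h i j a := rfl
    rw [← h2, ← this, Matrix.inv_def, Matrix.smul_apply, Matrix.adjugate_apply]
    simp
  have hev : h i j =ᶠ[nhds z] fun a => ((Matrix.of fun i j => g i j a).det)⁻¹ *
      ((Matrix.of fun i j => g i j a).updateRow j (Pi.single i 1)).det := by
    filter_upwards [hW.mem_nhds hz] with a ha using heq a ha
  refine DifferentiableAt.congr_of_eventuallyEq ?_ hev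
  refine ((hdet _ fun i j => hg i j z hz).inv hne).mul (hdet _ fun k l => ?_)
  by_cases hk : k = j
  · subst hk; simp
  · simp [Matrix.updateRow_ne hk]; exact hg k l z hz

/-- the bilinear form of a matrix -/
def Qf (g : Fin n → Fin n → ℝ) (U V : Fin n → ℝ) : ℝ := ∑ i, ∑ j, g i j * U i * V j

theorem Qf_eq (g : Fin n → Fin n → ℝ) (U V : Fin n → ℝ) :
    Qf g U V = ∑ i, U i * ∑ j, g i j * V j := by
  unfold Qf
  refine Finset.sum_congr rfl fun i _ => ?_
  rw [Finset.mul_sum]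
  exact Finset.sum_congr rfl fun j _ => by ring

theorem Qf_symm (g : Fin n → Fin n → ℝ) (hg : ∀ i j, g i j = g j i) (U V : Fin n → ℝ) :
    Qf g U V = Qf g V U := by
  unfold Qf
  rw [Finset.sum_comm]
  refine Finset.sum_congr rfl fun i _ => Finset.sum_congr rfl fun j _ => ?_
  rw [hg j i]; ring

theorem Qf_lin (g : Fin n → Fin n → ℝ) (P R S V : Fin n → ℝ) (a : ℝ) :
    Qf g (fun i => P i - R i - a * S i) V = Qf g P V - Qf g R V - a * Qf g S V := by
  unfold Qf
  simp only [Finset.mul_sum, ← Finset.sum_sub_distrib]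
  refine Finset.sum_congr rfl fun i _ => Finset.sum_congr rfl fun j _ => ?_
  ring

theorem matinv_apply (g h : Fin n → Fin n → ℝ)
    (hgh : ∀ i j, ∑ k, h i k * g k j = if i = j then (1:ℝ) else 0) (U : Fin n → ℝ) (i : Fin n) :
    ∑ j, h i j * (∑ k, g j k * U k) = U i := by
  simp only [Finset.mul_sum]
  rw [Finset.sum_comm]
  have : ∀ k, ∑ j, h i j * (g j k * U k) = (if i = k then (1:ℝ) else 0) * U k := by
    intro k
    rw [← hgh i k, Finset.sum_mul]
    exact Finset.sum_congr rfl fun j _ => by ring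
  simp [this]

theorem final_alg (g h : Fin n → Fin n → ℝ) (hg : ∀ i j, g i j = g j i)
    (hhg : ∀ i j, ∑ k, h i k * g k j = if i = j then (1:ℝ) else 0)
    (y X A B : Fin n → ℝ) (a : ℝ) (hy : Qf g y y = 1) (hyX : Qf g y X = -a)
    (hX : ∀ l, ∑ i, g l i * X i = A l - B l - a * ∑ j, g l j * y j) :
    Qf g X X = Qf g (fun i => ∑ j, h i j * A j) (fun i => ∑ j, h i j * A j)
      + Qf g (fun i => ∑ j, h i j * B j) (fun i => ∑ j, h i j * B j)
      - 2 * Qf g (fun i => ∑ j, h i j * B j) (fun i => ∑ j, h i j * A j) + a ^ 2 := by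
  set P : Fin n → ℝ := fun i => ∑ j, h i j * A j with hP
  set R : Fin n → ℝ := fun i => ∑ j, h i j * B j with hR
  have hXe : X = fun i => P i - R i - a * y i := by
    funext i
    have h1 := matinv_apply g h hhg X i
    have h2 := matinv_apply g h hhg y i
    rw [← h1, ← h2, hP, hR]
    simp only [hX]
    rw [Finset.mul_sum, ← Finset.sum_sub_distrib, ← Finset.sum_sub_distrib]
    exact Finset.sum_congr rfl fun j _ => by ring
  have e : ∀ V, Qf g X V = Qf g P V - Qf g R V - a * Qf g y V := by
    intro V; conv_lhs => rw [hXe]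
    exact Qf_lin g P R y V a
  have e1 := e X
  have e2 := e P
  have e3 := e R
  have e4 := e y
  rw [Qf_symm g hg P X, Qf_symm g hg R X] at e1
  rw [Qf_symm g hg X y] at e4
  rw [Qf_symm g hg P y, Qf_symm g hg R y, hyX, hy] at e4
  rw [hyX] at e1
  rw [Qf_symm g hg P R] at e3
  have e5 : Qf g y P - Qf g y R = 0 := by linarith
  rw [e1, e2, e3]
  linear_combination (-a) * e5

theorem sq_smooth {W : Set (Pt n)} {F : Pt n → ℝ}
    (hF : ContDiffOn ℝ (⊤ : ℕ∞) F W) : ContDiffOn ℝ (⊤ : ℕ∞) (fun w => F w ^ 2) W := hF.pow 2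

theorem gF_smooth {W : Set (Pt n)} (hW : IsOpen W) {F : Pt n → ℝ}
    (hF : ContDiffOn ℝ (⊤ : ℕ∞) F W) (i j : Fin n) : ContDiffOn ℝ (⊤ : ℕ∞) (gF F i j) W :=
  contDiffOn_const.mul (pdy_smooth hW (pdy_smooth hW (sq_smooth hF) j) i)

theorem gF_symm {W : Set (Pt n)} (hW : IsOpen W) {F : Pt n → ℝ}
    (hF : ContDiffOn ℝ (⊤ : ℕ∞) F W) {z : Pt n} (hz : z ∈ W) (i j : Fin n) :
    gF F i j z = gF F j i z := by
  unfold gF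
  rw [pdy_comm hW (sq_smooth hF) hz]

theorem pdy_gF {W : Set (Pt n)} (hW : IsOpen W) {F : Pt n → ℝ}
    (hF : ContDiffOn ℝ (⊤ : ℕ∞) F W) {z : Pt n} (hz : z ∈ W) (p i j : Fin n) :
    pdy p (gF F i j) z = 2 * CF F p i j z := by
  have hd := smooth_diff hW (pdy_smooth hW (pdy_smooth hW (sq_smooth hF) j) i) hz
  have : pdy p (gF F i j) z = 1 / 2 * pdy p (pdy i (pdy j (fun w => F w ^ 2))) z := by
    unfold gF
    rw [pdy, fderiv_const_mul hd]
    rfl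
  rw [this]; unfold CF; ring

theorem CF_symm12 {W : Set (Pt n)} (hW : IsOpen W) {F : Pt n → ℝ}
    (hF : ContDiffOn ℝ (⊤ : ℕ∞) F W) {z : Pt n} (hz : z ∈ W) (i j k : Fin n) :
    CF F i j k z = CF F j i k z := by
  unfold CF
  rw [pdy_comm hW (pdy_smooth hW (sq_smooth hF) k) hz]

theorem CF_symm23 {W : Set (Pt n)} (hW : IsOpen W) {F : Pt n → ℝ}
    (hF : ContDiffOn ℝ (⊤ : ℕ∞) F W) {z : Pt n} (hz : z ∈ W) (i j k : Fin n) :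
    CF F i j k z = CF F i k j z := by
  have : pdy i (pdy j (pdy k (fun w => F w ^ 2))) z = pdy i (pdy k (pdy j (fun w => F w ^ 2))) z := by
    have := fderiv_congr_on hW (fun a ha => pdy_comm hW (sq_smooth hF) ha j k) hz
    rw [pdy, this]; rfl
  unfold CF
  rw [this]

/-- differentiate an Euler relation -/
theorem euler_diff {W : Set (Pt n)} (hW : IsOpen W) {f : Pt n → ℝ} (c : ℝ)
    (hf : ContDiffOn ℝ (⊤ : ℕ∞) f W)
    (he : ∀ z ∈ W, ∑ k, z.2 k * pdy k f z = c * f z) (i : Fin n) :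
    ∀ z ∈ W, ∑ k, z.2 k * pdy k (pdy i f) z = (c - 1) * pdy i f z := by
  intro z hz
  have h := DFunLike.congr_fun (fderiv_congr_on hW he hz) (0, Pi.single i 1)
  rw [fderiv_sum_mul (f := fun k a => a.2 k) (fun k => diff_coord z k)
    (fun k => smooth_diff hW (pdy_smooth hW hf k) hz),
    fderiv_const_mul (smooth_diff hW hf hz)] at h
  simp only [fderiv_coord, Finset.sum_add_distrib] at h
  have h2 : ∀ k, fderiv ℝ (pdy k f) z (0, Pi.single i 1) = pdy k (pdy i f) z :=
    fun k => pdy_comm hW hf hz i k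
  have h3 : (c • fderiv ℝ f z) (0, Pi.single i 1) = c * pdy i f z := rfl
  rw [h3] at h
  simp only [h2, Pi.single_apply, ite_mul, one_mul, zero_mul, Finset.sum_ite_eq',
    Finset.mem_univ, if_true] at h
  linarith

theorem finsler_facts {W : Set (Pt n)} (hW : IsOpen W) {F : Pt n → ℝ}
    (hF : ContDiffOn ℝ (⊤ : ℕ∞) F W)
    (hFhom : ∀ z ∈ W, ∀ t : ℝ, 0 < t → F (z.1, t • z.2) = t * F z)
    {z : Pt n} (hz : z ∈ W) :
    (∀ l, ∑ j, gF F l j z * z.2 j = F z * pdy l F z) ∧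
    (∑ l, z.2 l * pdy l F z = F z) ∧
    (∀ p i, ∑ l, CF F p i l z * z.2 l = 0) := by
  have hE := sq_smooth hF
  have e0 : ∀ z ∈ W, ∑ k, z.2 k * pdy k (fun w => F w ^ 2) z = 2 * (fun w => F w ^ 2) z := by
    intro z hz
    have := euler_hom (fun w => F w ^ 2) 2 z (smooth_diff hW hE hz)
      (fun t ht => by simp only [hFhom z hz t ht]; ring)
    simpa using this
  have e1 := euler_diff hW 2 hE e0
  refine ⟨?_, ?_, ?_⟩
  · intro l
    have h := e1 l z hz
    have h2 : pdy l (fun w => F w ^ 2) z = 2 * (F z * pdy l F z) := by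
      have hd := smooth_diff hW hF hz
      have : (fun w => F w ^ 2) = fun w => F w * F w := by funext w; ring
      rw [this, pdy, fderiv_fun_mul hd hd]
      simp [pdy]; ring
    rw [h2] at h
    have h3 : ∑ j, gF F l j z * z.2 j = 1 / 2 * ∑ k, z.2 k * pdy k (pdy l fun w => F w ^ 2) z := by
      rw [Finset.mul_sum]
      refine Finset.sum_congr rfl fun k _ => ?_
      rw [gF_symm hW hF hz]; unfold gF; ring
    rw [h3, h]; ring
  · have := euler_hom F 1 z (smooth_diff hW hF hz) (fun t ht => by rw [hFhom z hz t ht]; ring)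
    simpa using this
  · intro p i
    have h := euler_diff hW (2 - 1) (pdy_smooth hW hE i) (e1 i) p z hz
    have h3 : ∑ l, CF F p i l z * z.2 l
        = 1 / 4 * ∑ k, z.2 k * pdy k (pdy p (pdy i fun w => F w ^ 2)) z := by
      rw [Finset.mul_sum]
      refine Finset.sum_congr rfl fun k _ => ?_
      rw [CF_symm23 hW hF hz p i k, CF_symm12 hW hF hz p k i]
      unfold CF; ring
    rw [h3, h]; ring

/-- vertical part of the generator -/
def wV (F : Pt n → ℝ) (Γ : Fin n → Fin n → Fin n → Pt n → ℝ)
    (Ω : Fin n → Fin n → (Fin n → ℝ) → ℝ) (ginv : Fin n → Fin n → Pt n → ℝ) (z : Pt n)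
    (p : Fin n) : ℝ := -(∑ k, Nc Γ p k z * z.2 k) + F z * Yy Ω ginv p z

/-- derivative along the generator -/
def DX (F : Pt n → ℝ) (Γ : Fin n → Fin n → Fin n → Pt n → ℝ)
    (Ω : Fin n → Fin n → (Fin n → ℝ) → ℝ) (ginv : Fin n → Fin n → Pt n → ℝ) (f : Pt n → ℝ)
    (z : Pt n) : ℝ := fderiv ℝ f z (z.2, wV F Γ Ω ginv z)

theorem sum_swap_aux (N : Fin n → Fin n → ℝ) (y b : Fin n → ℝ) :
    ∑ k, y k * ∑ p, N p k * b p = ∑ p, (∑ k, N p k * y k) * b p := by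
  simp only [Finset.mul_sum, Finset.sum_mul]
  rw [Finset.sum_comm]
  exact Finset.sum_congr rfl fun p _ => Finset.sum_congr rfl fun k _ => by ring

theorem DX_expand (F : Pt n → ℝ) (Γ : Fin n → Fin n → Fin n → Pt n → ℝ)
    (Ω : Fin n → Fin n → (Fin n → ℝ) → ℝ) (ginv : Fin n → Fin n → Pt n → ℝ) (f : Pt n → ℝ)
    (z : Pt n) : DX F Γ Ω ginv f z = ∑ k, z.2 k * pdx k f z
      - ∑ p, (∑ k, Nc Γ p k z * z.2 k) * pdy p f z + F z * ∑ p, Yy Ω ginv p z * pdy p f z := by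
  unfold DX
  rw [fderiv_expand]
  simp only [wV, add_mul, neg_mul, Finset.sum_add_distrib, Finset.sum_neg_distrib,
    Finset.mul_sum]
  simp only [mul_assoc]
  ring

theorem Xs_eq (F : Pt n → ℝ) (Γ : Fin n → Fin n → Fin n → Pt n → ℝ)
    (Ω : Fin n → Fin n → (Fin n → ℝ) → ℝ) (ginv : Fin n → Fin n → Pt n → ℝ) (f : Pt n → ℝ)
    (z : Pt n) : Xs F Γ Ω ginv f z = DX F Γ Ω ginv f z := by
  rw [DX_expand]
  unfold Yy
  rw [← sum_swap_aux (fun p k => Nc Γ p k z), ← sum_swap_aux (fun p k => Yl Ω ginv p k z)]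
  rw [Finset.mul_sum, ← Finset.sum_sub_distrib, ← Finset.sum_add_distrib]
  refine Finset.sum_congr rfl fun k _ => ?_
  unfold dmS dhS
  ring

theorem XVec_eq {W : Set (Pt n)} (F : Pt n → ℝ) (Γ : Fin n → Fin n → Fin n → Pt n → ℝ)
    (hΓsym : ∀ i j k, ∀ z ∈ W, Γ i j k z = Γ i k j z)
    (Ω : Fin n → Fin n → (Fin n → ℝ) → ℝ) (ginv : Fin n → Fin n → Pt n → ℝ)
    (V : Fin n → Pt n → ℝ) {z : Pt n} (hz : z ∈ W) (i : Fin n) :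
    XVec F Γ Ω ginv V i z = DX F Γ Ω ginv (V i) z + ∑ p, Nc Γ i p z * V p z := by
  have h1 : ∑ p, Nc Γ i p z * V p z = ∑ k, z.2 k * ∑ p, Γ i k p z * V p z := by
    rw [sum_swap_aux (fun p k => Γ i k p z)]
    unfold Nc
    refine Finset.sum_congr rfl fun p _ => ?_
    congr 1
    exact Finset.sum_congr rfl fun k _ => by rw [hΓsym i p k z hz]
  rw [h1, ← Xs_eq]
  unfold Xs XVec
  rw [← Finset.sum_add_distrib]
  refine Finset.sum_congr rfl fun k _ => ?_
  unfold dmVec dmS dhS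
  ring

/-- derivative of the metric along the generator -/
theorem DX_g {W : Set (Pt n)} (hW : IsOpen W) {F : Pt n → ℝ}
    (hF : ContDiffOn ℝ (⊤ : ℕ∞) F W)
    (Γ : Fin n → Fin n → Fin n → Pt n → ℝ)
    (hcompat : ∀ z ∈ W, ∀ j l m,
      pdx m (gF F j l) z =
        ∑ k, (gF F k l z * Γ k j m z + gF F k j z * Γ k l m z
          + 2 * CF F j k l z * Nc Γ k m z))
    (Ω : Fin n → Fin n → (Fin n → ℝ) → ℝ) (ginv : Fin n → Fin n → Pt n → ℝ)
    {z : Pt n} (hz : z ∈ W) (l i : Fin n) :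
    DX F Γ Ω ginv (gF F l i) z = ∑ k, gF F k i z * Nc Γ k l z + ∑ k, gF F k l z * Nc Γ k i z
      + 2 * F z * ∑ p, Yy Ω ginv p z * CF F p l i z := by
  rw [DX_expand]
  have h1 : ∑ m, z.2 m * pdx m (gF F l i) z = ∑ k, gF F k i z * Nc Γ k l z
      + ∑ k, gF F k l z * Nc Γ k i z + 2 * ∑ k, CF F l k i z * ∑ m, Nc Γ k m z * z.2 m := by
    simp only [hcompat z hz, Finset.mul_sum]
    rw [Finset.sum_comm, ← Finset.sum_add_distrib, ← Finset.sum_add_distrib]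
    refine Finset.sum_congr rfl fun k _ => ?_
    rw [show Nc Γ k l z = ∑ m, Γ k l m z * z.2 m from rfl,
      show Nc Γ k i z = ∑ m, Γ k i m z * z.2 m from rfl]
    simp only [Finset.mul_sum]
    rw [← Finset.sum_add_distrib, ← Finset.sum_add_distrib]
    exact Finset.sum_congr rfl fun m _ => by ring
  rw [h1]
  simp only [pdy_gF hW hF hz]
  have h2 : ∑ p, (∑ k, Nc Γ p k z * z.2 k) * (2 * CF F p l i z)
      = 2 * ∑ k, CF F l k i z * ∑ m, Nc Γ k m z * z.2 m := by
    rw [Finset.mul_sum]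
    refine Finset.sum_congr rfl fun p _ => ?_
    rw [CF_symm12 hW hF hz p l i]; ring
  have h3 : ∑ p, Yy Ω ginv p z * (2 * CF F p l i z) = 2 * ∑ p, Yy Ω ginv p z * CF F p l i z := by
    rw [Finset.mul_sum]
    exact Finset.sum_congr rfl fun p _ => by ring
  rw [h2, h3]; ring

theorem lower_nablaV {W : Set (Pt n)} {F : Pt n → ℝ} (ginv : Fin n → Fin n → Pt n → ℝ)
    (hginv : ∀ z ∈ W, ∀ i j, ∑ k, gF F i k z * ginv k j z = if i = j then (1:ℝ) else 0)
    (u : Pt n → ℝ) (l : Fin n) : ∀ z ∈ W, ∑ i, gF F l i z * nablaV ginv u i z = pdy l u z := by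
  intro z hz
  exact matinv_apply (fun i j => ginv i j z) (fun i j => gF F i j z) (hginv z hz)
    (fun j => pdy j u z) l

theorem K1 {W : Set (Pt n)} (hW : IsOpen W) {F : Pt n → ℝ}
    (hF : ContDiffOn ℝ (⊤ : ℕ∞) F W)
    (ginv : Fin n → Fin n → Pt n → ℝ)
    (hginv : ∀ z ∈ W, ∀ i j, ∑ k, gF F i k z * ginv k j z = if i = j then (1:ℝ) else 0)
    (Γ : Fin n → Fin n → Fin n → Pt n → ℝ)
    (hΓsym : ∀ i j k, ∀ z ∈ W, Γ i j k z = Γ i k j z)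
    (hcompat : ∀ z ∈ W, ∀ j l m,
      pdx m (gF F j l) z =
        ∑ k, (gF F k l z * Γ k j m z + gF F k j z * Γ k l m z
          + 2 * CF F j k l z * Nc Γ k m z))
    (Ω : Fin n → Fin n → (Fin n → ℝ) → ℝ)
    (u : Pt n → ℝ)
    (hV : ∀ i, ∀ z ∈ W, DifferentiableAt ℝ (nablaV ginv u i) z)
    {z : Pt n} (hz : z ∈ W) (l : Fin n) :
    ∑ i, gF F l i z * XVec F Γ Ω ginv (nablaV ginv u) i z
      = DX F Γ Ω ginv (pdy l u) z - ∑ k, Nc Γ k l z * pdy k u z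
        - 2 * F z * ∑ p, Yy Ω ginv p z * ∑ i, CF F p l i z * nablaV ginv u i z := by
  have h := DFunLike.congr_fun (fderiv_congr_on hW (lower_nablaV ginv hginv u l) hz)
    (z.2, wV F Γ Ω ginv z)
  rw [fderiv_sum_mul (fun k => smooth_diff hW (gF_smooth hW hF l k) hz)
    (fun k => hV k z hz)] at h
  change ∑ k, (DX F Γ Ω ginv (gF F l k) z * nablaV ginv u k z
    + gF F l k z * DX F Γ Ω ginv (nablaV ginv u k) z) = DX F Γ Ω ginv (pdy l u) z at h
  rw [← h]
  simp only [XVec_eq F Γ hΓsym Ω ginv _ hz, DX_g hW hF Γ hcompat Ω ginv hz]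
  set V := fun i => nablaV ginv u i z with hVd
  simp only [mul_add, add_mul, Finset.sum_add_distrib]
  have h1 : ∑ x, (∑ k, gF F k x z * Nc Γ k l z) * nablaV ginv u x z
      = ∑ k, Nc Γ k l z * pdy k u z := by
    simp only [← lower_nablaV ginv hginv u _ z hz, Finset.sum_mul, Finset.mul_sum]
    rw [Finset.sum_comm]
    exact Finset.sum_congr rfl fun k _ => Finset.sum_congr rfl fun x _ => by ring
  have h2 : ∑ x, (∑ k, gF F k l z * Nc Γ k x z) * nablaV ginv u x z
      = ∑ i, gF F l i z * ∑ p, Nc Γ i p z * nablaV ginv u p z := by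
    simp only [Finset.sum_mul, Finset.mul_sum]
    rw [Finset.sum_comm]
    refine Finset.sum_congr rfl fun k _ => Finset.sum_congr rfl fun x _ => ?_
    rw [gF_symm hW hF hz k l]; ring
  have h3 : ∑ x, (2 * F z * ∑ p, Yy Ω ginv p z * CF F p l x z) * nablaV ginv u x z
      = 2 * F z * ∑ p, Yy Ω ginv p z * ∑ i, CF F p l i z * nablaV ginv u i z := by
    simp only [Finset.sum_mul, Finset.mul_sum]
    rw [Finset.sum_comm]
    exact Finset.sum_congr rfl fun k _ => Finset.sum_congr rfl fun x _ => by ring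
  rw [h1, h2, h3]; ring

theorem spray_diff {W : Set (Pt n)} (hW : IsOpen W)
    (Γ : Fin n → Fin n → Fin n → Pt n → ℝ)
    (hΓsmooth : ∀ i j k, ContDiffOn ℝ (⊤ : ℕ∞) (Γ i j k) W)
    (hΓsym : ∀ i j k, ∀ z ∈ W, Γ i j k z = Γ i k j z)
    (hspray : ∀ z ∈ W, ∀ i l, (∑ j, ∑ k, z.2 j * z.2 k * pdy l (Γ i j k) z) = 0)
    {z : Pt n} (hz : z ∈ W) (p l : Fin n) :
    DifferentiableAt ℝ (fun a : Pt n => ∑ k, Nc Γ p k a * a.2 k) z ∧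
    pdy l (fun a : Pt n => ∑ k, Nc Γ p k a * a.2 k) z = 2 * Nc Γ p l z := by
  have hG : ∀ i j k, DifferentiableAt ℝ (Γ i j k) z :=
    fun i j k => smooth_diff hW (hΓsmooth i j k) hz
  have hN : ∀ i j, DifferentiableAt ℝ (Nc Γ i j) z :=
    fun i j => diff_sum_mul (hG i j) (fun k => diff_coord z k)
  refine ⟨diff_sum_mul (hN p) (fun k => diff_coord z k), ?_⟩
  rw [pdy, fderiv_sum_mul (hN p) (fun k => diff_coord z k)]
  have hNd : ∀ k, fderiv ℝ (Nc Γ p k) z (0, Pi.single l 1)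
      = ∑ j, pdy l (Γ p k j) z * z.2 j + Γ p k l z := by
    intro k
    unfold Nc
    rw [fderiv_sum_mul (hG p k) (fun k => diff_coord z k)]
    simp only [fderiv_coord, Finset.sum_add_distrib]
    simp [Pi.single_apply, pdy]
  simp only [hNd, fderiv_coord, Finset.sum_add_distrib, add_mul]
  have h1 : ∑ k, (∑ j, pdy l (Γ p k j) z * z.2 j) * z.2 k = 0 := by
    rw [← hspray z hz p l]
    refine Finset.sum_congr rfl fun k _ => ?_
    rw [Finset.sum_mul]
    exact Finset.sum_congr rfl fun x _ => by ring
  have h2 : ∑ k, Γ p k l z * z.2 k = Nc Γ p l z :=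
    Finset.sum_congr rfl fun k _ => by rw [hΓsym p k l z hz]
  rw [h1, h2]
  simp [Pi.single_apply]; ring

theorem ginv_symm (g h : Fin n → Fin n → ℝ) (hg : ∀ i j, g i j = g j i)
    (hhg : ∀ i j, ∑ k, h i k * g k j = if i = j then (1:ℝ) else 0) (i j : Fin n) :
    h i j = h j i := by
  have e1 : (Matrix.of h) * (Matrix.of g) = 1 := by
    ext i j
    rw [Matrix.mul_apply, Matrix.one_apply]
    exact hhg i j
  have e2 : (Matrix.of g) * (Matrix.of h).transpose = 1 := by
    have := congrArg Matrix.transpose e1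
    rw [Matrix.transpose_mul, Matrix.transpose_one] at this
    rw [← this]
    congr 1
    ext i j
    exact hg i j
  have e3 := left_inv_eq_right_inv e1 e2
  exact congrFun (congrFun e3 i) j

theorem omega_diff (f : (Fin n → ℝ) → ℝ) {z : Pt n}
    (hf : DifferentiableAt ℝ (fun a : Pt n => f a.1) z) (l : Fin n) :
    fderiv ℝ (fun a : Pt n => f a.1) z (0, Pi.single l 1) = 0 := by
  rw [← hf.lineDeriv_eq_fderiv, lineDeriv]
  simp

/-- the covector `Ω(y, ·)` -/
def Pw (Ω : Fin n → Fin n → (Fin n → ℝ) → ℝ) (m : Fin n) (z : Pt n) : ℝ :=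
  ∑ k, z.2 k * Ω k m z.1

theorem Yy_eq (Ω : Fin n → Fin n → (Fin n → ℝ) → ℝ) (ginv : Fin n → Fin n → Pt n → ℝ)
    (z : Pt n) (b : Fin n) : Yy Ω ginv b z = ∑ k, ginv b k z * Pw Ω k z := by
  unfold Yy Yl Pw
  simp only [Finset.sum_mul, Finset.mul_sum]
  rw [Finset.sum_comm]
  exact Finset.sum_congr rfl fun k _ => Finset.sum_congr rfl fun x _ => by ring

theorem K2 {W : Set (Pt n)} (hW : IsOpen W) {F : Pt n → ℝ}
    (hF : ContDiffOn ℝ (⊤ : ℕ∞) F W)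
    (ginv : Fin n → Fin n → Pt n → ℝ)
    (hginv : ∀ z ∈ W, ∀ i j, ∑ k, gF F i k z * ginv k j z = if i = j then (1:ℝ) else 0)
    (hginv' : ∀ z ∈ W, ∀ i j, ∑ k, ginv i k z * gF F k j z = if i = j then (1:ℝ) else 0)
    (Γ : Fin n → Fin n → Fin n → Pt n → ℝ)
    (hΓsmooth : ∀ i j k, ContDiffOn ℝ (⊤ : ℕ∞) (Γ i j k) W)
    (hΓsym : ∀ i j k, ∀ z ∈ W, Γ i j k z = Γ i k j z)
    (hspray : ∀ z ∈ W, ∀ i l, (∑ j, ∑ k, z.2 j * z.2 k * pdy l (Γ i j k) z) = 0)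
    (Ω : Fin n → Fin n → (Fin n → ℝ) → ℝ)
    (hΩsmooth : ∀ j k, ContDiffOn ℝ (⊤ : ℕ∞) (fun z : Pt n => Ω j k z.1) W)
    (u : Pt n → ℝ) (hu : ContDiffOn ℝ (⊤ : ℕ∞) u W)
    (hV : ∀ i, ∀ z ∈ W, DifferentiableAt ℝ (nablaV ginv u i) z)
    {z : Pt n} (hz : z ∈ W) (l : Fin n) :
    pdy l (Xs F Γ Ω ginv u) z
      = DX F Γ Ω ginv (pdy l u) z - ∑ k, Nc Γ k l z * pdy k u z
        - 2 * F z * (∑ p, Yy Ω ginv p z * ∑ i, CF F p l i z * nablaV ginv u i z)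
        + dmS F Γ Ω ginv l u z + pdy l F z * ∑ p, Yy Ω ginv p z * pdy p u z := by
  have hPd : ∀ m, DifferentiableAt ℝ (Pw Ω m) z := fun m =>
    diff_sum_mul (f := fun k (a : Pt n) => a.2 k) (fun k => diff_coord z k)
      (fun k => smooth_diff hW (hΩsmooth k m) hz)
  have hPl : ∀ m, fderiv ℝ (Pw Ω m) z (0, Pi.single l 1) = Ω l m z.1 := by
    intro m
    unfold Pw
    rw [fderiv_sum_mul (f := fun k (a : Pt n) => a.2 k) (fun k => diff_coord z k)
      (fun k => smooth_diff hW (hΩsmooth k m) hz)]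
    simp only [fderiv_coord, omega_diff _ (smooth_diff hW (hΩsmooth _ m) hz)]
    simp [Pi.single_apply]
  have hYu : ∀ a ∈ W, ∀ k, ∑ j, Yl Ω ginv j k a * pdy j u a
      = ∑ m, Ω k m a.1 * nablaV ginv u m a := by
    intro a ha k
    unfold Yl nablaV
    simp only [Finset.sum_mul, Finset.mul_sum]
    rw [Finset.sum_comm]
    refine Finset.sum_congr rfl fun m _ => Finset.sum_congr rfl fun j _ => ?_
    rw [ginv_symm (fun i j => gF F i j a) (fun i j => ginv i j a)
      (fun i j => gF_symm hW hF ha i j) (hginv' a ha) j m]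
    ring
  have hYPV : ∀ a ∈ W, ∑ p, Yy Ω ginv p a * pdy p u a
      = ∑ m, Pw Ω m a * nablaV ginv u m a := by
    intro a ha
    have : ∀ m, Pw Ω m a * nablaV ginv u m a
        = ∑ k, a.2 k * (Ω k m a.1 * nablaV ginv u m a) := by
      intro m
      unfold Pw
      rw [Finset.sum_mul]
      exact Finset.sum_congr rfl fun x _ => by ring
    simp only [this]
    rw [Finset.sum_comm]
    simp only [← Finset.mul_sum, ← hYu a ha]
    unfold Yy
    rw [← sum_swap_aux (fun p k => Yl Ω ginv p k a)]
  have hXs : ∀ a ∈ W, Xs F Γ Ω ginv u a = (∑ k, a.2 k * pdx k u a)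
      - (∑ p, (∑ k, Nc Γ p k a * a.2 k) * pdy p u a)
      + F a * ∑ m, Pw Ω m a * nablaV ginv u m a := by
    intro a ha
    rw [Xs_eq, DX_expand, hYPV a ha]
  have hxd : ∀ k, DifferentiableAt ℝ (pdx k u) z :=
    fun k => smooth_diff hW (pdx_smooth hW hu k) hz
  have hyd : ∀ k, DifferentiableAt ℝ (pdy k u) z :=
    fun k => smooth_diff hW (pdy_smooth hW hu k) hz
  have hs := fun p => spray_diff hW Γ hΓsmooth hΓsym hspray hz p l
  have hFd := smooth_diff hW hF hz
  have d1 := diff_sum_mul (f := fun k (a : Pt n) => a.2 k) (fun k => diff_coord z k) hxd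
  have d2 := diff_sum_mul (fun p => (hs p).1) hyd
  have d3 := diff_sum_mul hPd (fun m => hV m z hz)
  have h := DFunLike.congr_fun (fderiv_congr_on hW hXs hz) (0, Pi.single l 1)
  rw [fderiv_fun_add (d1.fun_sub d2) (hFd.fun_mul d3), fderiv_fun_sub d1 d2,
    fderiv_fun_mul hFd d3] at h
  simp only [_root_.add_apply, _root_.sub_apply, _root_.smul_apply, smul_eq_mul] at h
  rw [fderiv_sum_mul (f := fun k (a : Pt n) => a.2 k) (fun k => diff_coord z k) hxd,
    fderiv_sum_mul (fun p => (hs p).1) hyd, fderiv_sum_mul hPd (fun m => hV m z hz)] at h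
  have hs2 : ∀ p, fderiv ℝ (fun a : Pt n => ∑ k, Nc Γ p k a * a.2 k) z (0, Pi.single l 1)
    = 2 * Nc Γ p l z := fun p => (hs p).2
  have hx2 : ∀ k, fderiv ℝ (pdx k u) z (0, Pi.single l 1) = pdx k (pdy l u) z :=
    fun k => pdyx_comm hW hu hz l k
  have hy2 : ∀ k, fderiv ℝ (pdy k u) z (0, Pi.single l 1) = pdy k (pdy l u) z :=
    fun k => pdy_comm hW hu hz l k
  simp only [hPl, hs2, hx2, hy2, fderiv_coord, Finset.sum_add_distrib] at h
  have c1 : ∑ k, ((0, Pi.single l 1) : Pt n).2 k * pdx k u z = pdx l u z := by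
    simp [Pi.single_apply]
  -- contraction with the derivative of the vertical gradient
  have hVl : ∀ b, ∑ m, gF F b m z * fderiv ℝ (nablaV ginv u m) z (0, Pi.single l 1)
      = pdy b (pdy l u) z - 2 * ∑ m, CF F b l m z * nablaV ginv u m z := by
    intro b
    have h := DFunLike.congr_fun (fderiv_congr_on hW (lower_nablaV ginv hginv u b) hz)
      (0, Pi.single l 1)
    rw [fderiv_sum_mul (fun k => smooth_diff hW (gF_smooth hW hF b k) hz)
      (fun k => hV k z hz), hy2, Finset.sum_add_distrib] at h
    have hg2 : ∀ m, fderiv ℝ (gF F b m) z (0, Pi.single l 1) = 2 * CF F b l m z := by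
      intro m
      rw [CF_symm12 hW hF hz b l m]
      exact pdy_gF hW hF hz l b m
    simp only [hg2, mul_assoc, ← Finset.mul_sum] at h
    linarith
  have c2 : ∑ m, Pw Ω m z * fderiv ℝ (nablaV ginv u m) z (0, Pi.single l 1)
      = (∑ p, Yy Ω ginv p z * pdy p (pdy l u) z)
        - 2 * ∑ p, Yy Ω ginv p z * ∑ i, CF F p l i z * nablaV ginv u i z := by
    have hP : ∀ m, Pw Ω m z = ∑ b, gF F m b z * Yy Ω ginv b z := by
      intro m
      simp only [Yy_eq]
      exact (matinv_apply (fun i j => ginv i j z) (fun i j => gF F i j z) (hginv z hz)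
        (fun j => Pw Ω j z) m).symm
    have : ∑ m, Pw Ω m z * fderiv ℝ (nablaV ginv u m) z (0, Pi.single l 1)
        = ∑ b, Yy Ω ginv b z *
          ∑ m, gF F b m z * fderiv ℝ (nablaV ginv u m) z (0, Pi.single l 1) := by
      simp only [hP, Finset.sum_mul, Finset.mul_sum]
      rw [Finset.sum_comm]
      refine Finset.sum_congr rfl fun b _ => Finset.sum_congr rfl fun m _ => ?_
      rw [gF_symm hW hF hz m b]; ring
    rw [this]
    simp only [hVl, mul_sub, Finset.sum_sub_distrib]
    congr 1
    rw [Finset.mul_sum]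
    exact Finset.sum_congr rfl fun b _ => by ring
  have c3 : ∑ x, 2 * Nc Γ x l z * pdy x u z = 2 * ∑ x, Nc Γ x l z * pdy x u z := by
    rw [Finset.mul_sum]
    exact Finset.sum_congr rfl fun b _ => by ring
  rw [c1, c2, c3, ← hYPV z hz, ← hYu z hz] at h
  change pdy l (Xs F Γ Ω ginv u) z = _ at h
  rw [h, DX_expand]
  unfold dmS dhS
  rw [show fderiv ℝ F z (0, Pi.single l 1) = pdy l F z from rfl]
  ring

end helpers

/-- **Squared-norm commutation formula** (used to combine with the Pestov
identity): for a function `u` positively homogeneous of degree 0, on the set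
where `F = 1`,
`|X(∇·u)|² = |∇·(Xu)|² + |∇:u|² − 2⟨∇:u, ∇·(Xu)⟩ + ⟨Y(y), ∇·u⟩²`. -/
theorem stmt_13 (n : ℕ) (hn : 1 ≤ n) (W : Set (Pt n)) (hWopen : IsOpen W)
    (hWy : ∀ z ∈ W, z.2 ≠ 0)
    (hWcone : ∀ z ∈ W, ∀ t : ℝ, 0 < t → (z.1, t • z.2) ∈ W)
    (F : Pt n → ℝ) (hFsmooth : ContDiffOn ℝ (⊤ : ℕ∞) F W)
    (hFpos : ∀ z ∈ W, 0 < F z)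
    (hFhom : ∀ z ∈ W, ∀ t : ℝ, 0 < t → F (z.1, t • z.2) = t * F z)
    (ginv : Fin n → Fin n → Pt n → ℝ)
    (hginv : ∀ z ∈ W, ∀ i j, ∑ k, gF F i k z * ginv k j z = if i = j then (1:ℝ) else 0)
    (hginv' : ∀ z ∈ W, ∀ i j, ∑ k, ginv i k z * gF F k j z = if i = j then (1:ℝ) else 0)
    (Γ : Fin n → Fin n → Fin n → Pt n → ℝ)
    (hΓsmooth : ∀ i j k, ContDiffOn ℝ (⊤ : ℕ∞) (Γ i j k) W)
    (hΓsym : ∀ i j k, ∀ z ∈ W, Γ i j k z = Γ i k j z)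
    (hcompat : ∀ z ∈ W, ∀ j l m,
      pdx m (gF F j l) z =
        ∑ k, (gF F k l z * Γ k j m z + gF F k j z * Γ k l m z
          + 2 * CF F j k l z * Nc Γ k m z))
    (hspray : ∀ z ∈ W, ∀ i l, (∑ j, ∑ k, z.2 j * z.2 k * pdy l (Γ i j k) z) = 0)
    (Ω : Fin n → Fin n → (Fin n → ℝ) → ℝ)
    (hΩsmooth : ∀ j k, ContDiffOn ℝ (⊤ : ℕ∞) (fun z : Pt n => Ω j k z.1) W)
    (hΩanti : ∀ z ∈ W, ∀ j k, Ω j k z.1 = -Ω k j z.1)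
    (u : Pt n → ℝ) (hu : ContDiffOn ℝ (⊤ : ℕ∞) u W)
    (huhom : ∀ z ∈ W, ∀ t : ℝ, 0 < t → u (z.1, t • z.2) = u z) :
    ∀ z ∈ W, F z = 1 →
      iprod F (XVec F Γ Ω ginv (nablaV ginv u)) (XVec F Γ Ω ginv (nablaV ginv u)) z
        = iprod F (nablaV ginv (Xs F Γ Ω ginv u)) (nablaV ginv (Xs F Γ Ω ginv u)) z
          + iprod F (nablaM F Γ Ω ginv u) (nablaM F Γ Ω ginv u) z
          - 2 * iprod F (nablaM F Γ Ω ginv u) (nablaV ginv (Xs F Γ Ω ginv u)) z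
          + iprod F (Yy Ω ginv) (nablaV ginv u) z ^ 2 := by
  intro z hz hFz
  have hginvd : ∀ i j, ∀ z ∈ W, DifferentiableAt ℝ (ginv i j) z := fun i j z hz =>
    inv_diff hWopen (gF F) ginv (fun i j z hz => smooth_diff hWopen (gF_smooth hWopen hFsmooth i j) hz)
      hginv i j hz
  have hV : ∀ i, ∀ z ∈ W, DifferentiableAt ℝ (nablaV ginv u i) z := fun i z hz =>
    diff_sum_mul (fun j => hginvd i j z hz)
      (fun j => smooth_diff hWopen (pdy_smooth hWopen hu j) hz)
  have k1 := K1 hWopen hFsmooth ginv hginv Γ hΓsym hcompat Ω u hV hz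
  have k2 := K2 hWopen hFsmooth ginv hginv hginv' Γ hΓsmooth hΓsym hspray Ω hΩsmooth u hu hV hz
  obtain ⟨f1, f2, f3⟩ := finsler_facts hWopen hFsmooth hFhom hz
  have hu0 : ∀ z ∈ W, ∑ k, z.2 k * pdy k u z = 0 := by
    intro z hz
    have := euler_hom u 0 z (smooth_diff hWopen hu hz) (fun t ht => by
      rw [huhom z hz t ht]; simp)
    simpa using this
  have ha : iprod F (Yy Ω ginv) (nablaV ginv u) z = ∑ p, Yy Ω ginv p z * pdy p u z := by
    refine (Qf_eq (fun i j => gF F i j z) (fun i => Yy Ω ginv i z)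
      (fun i => nablaV ginv u i z)).trans ?_
    simp only [lower_nablaV ginv hginv u _ z hz]
  rw [ha]
  set a := ∑ p, Yy Ω ginv p z * pdy p u z with had
  refine final_alg (fun i j => gF F i j z) (fun i j => ginv i j z)
    (fun i j => gF_symm hWopen hFsmooth hz i j) (hginv' z hz) z.2
    (fun i => XVec F Γ Ω ginv (nablaV ginv u) i z)
    (fun l => pdy l (Xs F Γ Ω ginv u) z) (fun l => dmS F Γ Ω ginv l u z) a ?_ ?_ ?_
  · rw [Qf_eq]
    simp only [f1, hFz, one_mul]
    rw [f2, hFz]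
  · rw [Qf_eq]
    simp only [k1, hFz, mul_one]
    have e := DFunLike.congr_fun (fderiv_congr_on hWopen hu0 hz) (z.2, wV F Γ Ω ginv z)
    rw [fderiv_sum_mul (f := fun k (a : Pt n) => a.2 k) (fun k => diff_coord z k)
      (fun k => smooth_diff hWopen (pdy_smooth hWopen hu k) hz)] at e
    simp only [fderiv_coord, Finset.sum_add_distrib] at e
    change ∑ k, wV F Γ Ω ginv z k * pdy k u z + ∑ k, z.2 k * DX F Γ Ω ginv (pdy k u) z
      = fderiv ℝ (fun _ : Pt n => (0:ℝ)) z (z.2, wV F Γ Ω ginv z) at e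
    have e2 : ∑ k, wV F Γ Ω ginv z k * pdy k u z
        = -(∑ p, (∑ k, Nc Γ p k z * z.2 k) * pdy p u z) + a := by
      simp only [wV, hFz, one_mul, add_mul, neg_mul, Finset.sum_add_distrib,
        Finset.sum_neg_distrib, had]
    have e3 : ∑ l, z.2 l * ∑ k, Nc Γ k l z * pdy k u z
        = ∑ p, (∑ k, Nc Γ p k z * z.2 k) * pdy p u z :=
      sum_swap_aux (fun p k => Nc Γ p k z) z.2 (fun p => pdy p u z)
    have e4 : ∑ l, z.2 l * (2 * ∑ p, Yy Ω ginv p z * ∑ i, CF F p l i z * nablaV ginv u i z)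
        = 0 := by
      have : ∀ l, z.2 l * (2 * ∑ p, Yy Ω ginv p z * ∑ i, CF F p l i z * nablaV ginv u i z)
          = ∑ p, ∑ i, 2 * Yy Ω ginv p z * nablaV ginv u i z * (CF F p i l z * z.2 l) := by
        intro l
        simp only [Finset.mul_sum]
        refine Finset.sum_congr rfl fun p _ => Finset.sum_congr rfl fun i _ => ?_
        rw [CF_symm23 hWopen hFsmooth hz p l i]; ring
      simp only [this]
      rw [Finset.sum_comm]
      refine Finset.sum_eq_zero fun p _ => ?_
      rw [Finset.sum_comm]
      refine Finset.sum_eq_zero fun i _ => ?_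
      rw [← Finset.mul_sum, f3, mul_zero]
    simp only [mul_sub, Finset.sum_sub_distrib]
    rw [e3, e4]
    simp only [fderiv_const, fderiv_fun_const, Pi.zero_apply, _root_.zero_apply] at e
    rw [e2] at e
    linarith
  · intro l
    simp only [k1, k2, f1, hFz]
    ring

end
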